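/- Under Condition (★), for every integer h ≥ 2 and every ε > 0, the quantity #{m ∈ 𝒩_h(x) : ω(m) < (1−ε)·log log N(m) or ω(m) > (1+ε)·log log N(m)} divided by #𝒩_h(x) tends to 0 as x → ∞; i.e., ω has normal order log log N(m) over the h-full elements. -/

import Mathlib

open Filter Topology Asymptotics
open scoped Classical

noncomputable section

/-- The norm on the free abelian monoid `P →₀ ℕ`, extended multiplicatively
from the norm `N` on the prime elements. -/
def Nm {P : Type*} (N : P → ℕ) (m : P →₀ ℕ) : ℕ :=
  m.prod fun p k => N p ^ k

/-- The number of distinct prime elements generating `m`. -/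
def omegaM {P : Type*} (m : P →₀ ℕ) : ℕ := m.support.card

/-- `m` is `h`-free: every multiplicity is at most `h - 1`. -/
def HFree {P : Type*} (h : ℕ) (m : P →₀ ℕ) : Prop := ∀ p, m p ≤ h - 1

/-- `m` is `h`-full: every nonzero multiplicity is at least `h`. -/
def HFull {P : Type*} (h : ℕ) (m : P →₀ ℕ) : Prop := ∀ p, m p = 0 ∨ h ≤ m p

/-- Condition (★): `#{m : N(m) ≤ x} = κ·x + O(x^θ)` with `κ > 0`, `0 ≤ θ < 1`. -/
def StarCond {P : Type*} (N : P → ℕ) (κ θ : ℝ) : Prop :=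
  0 < κ ∧ 0 ≤ θ ∧ θ < 1 ∧
    (fun x : ℝ => (({m : P →₀ ℕ | (Nm N m : ℝ) ≤ x}.ncard : ℝ) - κ * x))
      =O[atTop] fun x : ℝ => x ^ θ

/-- The generalized zeta function `ζ_M(s) = ∑_m N(m)^{-s}`. -/
def zetaM {P : Type*} (N : P → ℕ) (s : ℝ) : ℝ :=
  ∑' m : P →₀ ℕ, 1 / (Nm N m : ℝ) ^ s

/-- The constant `γ_h`. -/
def gammah {P : Type*} (N : P → ℕ) (h : ℕ) : ℝ :=
  ∏' p : P, (1 + ((N p : ℝ) - (N p : ℝ) ^ (1 / (h : ℝ))) /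
    ((N p : ℝ) ^ 2 * ((N p : ℝ) ^ (1 / (h : ℝ)) - 1)))

/-- `A` is the Mertens constant `𝔄` of the prime system:
`𝔄 = lim (∑_{N(p) ≤ x} 1/N(p) − log log x)`. -/
def IsMertens {P : Type*} (N : P → ℕ) (A : ℝ) : Prop :=
  Tendsto (fun x : ℝ =>
      (∑ᶠ p ∈ {p : P | (N p : ℝ) ≤ x}, 1 / (N p : ℝ)) - Real.log (Real.log x))
    atTop (𝓝 A)

/-- The constant `𝔅 = -π²/6`. -/
def Bconst : ℝ := -(Real.pi ^ 2) / 6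

/-- The constant `ℭ₁`, given the Mertens constant `A`. -/
def C1const {P : Type*} (N : P → ℕ) (h : ℕ) (A : ℝ) : ℝ :=
  A - ∑' p : P, ((N p : ℝ) - 1) / ((N p : ℝ) * ((N p : ℝ) ^ h - 1))

/-- The constant `ℭ₂`, given the Mertens constant `A`. -/
def C2const {P : Type*} (N : P → ℕ) (h : ℕ) (A : ℝ) : ℝ :=
  C1const N h A ^ 2 + C1const N h A + Bconst -
    ∑' p : P, (((N p : ℝ) ^ (h - 1) - 1) / ((N p : ℝ) ^ h - 1)) ^ 2

/-- The convergent series `𝔏_h(r)`. -/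
def LhSum {P : Type*} (N : P → ℕ) (h : ℕ) (r : ℝ) : ℝ :=
  ∑' p : P, 1 / ((N p : ℝ) ^ (r / (h : ℝ) - 1) *
    ((N p : ℝ) - (N p : ℝ) ^ (1 - 1 / (h : ℝ)) + 1))

/-- The constant `𝔇₁`, given the Mertens constant `A`. -/
def D1const {P : Type*} (N : P → ℕ) (h : ℕ) (A : ℝ) : ℝ :=
  A - Real.log (h : ℝ) + LhSum N h ((h : ℝ) + 1) - LhSum N h (2 * (h : ℝ))

/-- The constant `𝔇₂`, given the Mertens constant `A`. -/
def D2const {P : Type*} (N : P → ℕ) (h : ℕ) (A : ℝ) : ℝ :=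
  D1const N h A ^ 2 + D1const N h A + Bconst -
    ∑' p : P, (1 / ((N p : ℝ) - (N p : ℝ) ^ (1 - 1 / (h : ℝ)) + 1)) ^ 2

/-- The error term `R_{S_h}(x)` for `h`-free counts. -/
def RSfree (h : ℕ) (θ : ℝ) (x : ℝ) : ℝ :=
  if 1 / (h : ℝ) < θ then x ^ θ
  else if 1 / (h : ℝ) = θ then x ^ (1 / (h : ℝ)) * Real.log x
  else x ^ (1 / (h : ℝ))

/-- The error term `R_{N_h}(x)` for `h`-full counts. -/
def RNfull (h : ℕ) (θ : ℝ) (x : ℝ) : ℝ :=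
  if (h : ℝ) / ((h : ℝ) + 1) < θ then x ^ (θ / (h : ℝ))
  else if ∃ i : ℕ, 1 ≤ i ∧ i ≤ h - 1 ∧ θ = (h : ℝ) / ((h : ℝ) + (i : ℝ)) then
    x ^ (1 / ((h : ℝ) + 1)) * Real.log x
  else x ^ (1 / ((h : ℝ) + 1))

lemma rpow_littleO {θ : ℝ} (h : θ < 1) : (fun x : ℝ => x ^ θ) =o[atTop] fun x : ℝ => x := by
  rw [isLittleO_iff_tendsto' (by filter_upwards [eventually_gt_atTop 0] with x hx h0; linarith)]
  refine (tendsto_rpow_neg_atTop (sub_pos.2 h)).congr' ?_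
  filter_upwards [eventually_gt_atTop 0] with x hx
  rw [neg_sub, Real.rpow_sub hx, Real.rpow_one]

lemma Nm_add {P : Type*} (N : P → ℕ) (a b : P →₀ ℕ) : Nm N (a + b) = Nm N a * Nm N b := by
  unfold Nm
  exact Finsupp.prod_add_index' (fun _ => pow_zero _) (fun _ _ _ => pow_add _ _ _)

lemma Nm_zero {P : Type*} (N : P → ℕ) : Nm N 0 = 1 := by simp [Nm]

lemma Nm_single {P : Type*} (N : P → ℕ) (p : P) (k : ℕ) : Nm N (Finsupp.single p k) = N p ^ k := by
  simp [Nm]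

lemma Nm_smul {P : Type*} (N : P → ℕ) (k : ℕ) (a : P →₀ ℕ) : Nm N (k • a) = Nm N a ^ k := by
  induction k with
  | zero => simp [Nm_zero]
  | succ k ih => rw [succ_nsmul, Nm_add, ih, pow_succ]

lemma Nm_sum {P ι : Type*} (N : P → ℕ) (s : Finset ι) (f : ι → P →₀ ℕ) :
    Nm N (∑ i ∈ s, f i) = ∏ i ∈ s, Nm N (f i) := by
  induction s using Finset.induction_on with
  | empty => simp [Nm_zero]
  | insert a s ha ih => rw [Finset.sum_insert ha, Finset.prod_insert ha, Nm_add, ih]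

lemma Nm_pos {P : Type*} {N : P → ℕ} (hN : ∀ p, 2 ≤ N p) (a : P →₀ ℕ) : 1 ≤ Nm N a := by
  unfold Nm
  exact Nat.succ_le_of_lt (Finset.prod_pos fun p _ => pow_pos (by have := hN p; omega) _)

/-- counting function -/
def II {P : Type*} (N : P → ℕ) (x : ℝ) : ℝ := ({m : P →₀ ℕ | (Nm N m : ℝ) ≤ x}.ncard : ℝ)

lemma fin_of_star {P : Type*} {N : P → ℕ} {κ θ : ℝ} (hs : StarCond N κ θ) (x : ℝ) :
    {m : P →₀ ℕ | (Nm N m : ℝ) ≤ x}.Finite := by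
  obtain ⟨hκ, h0, h1, hO⟩ := hs
  have ho : (fun x : ℝ => (({m : P →₀ ℕ | (Nm N m : ℝ) ≤ x}.ncard : ℝ) - κ * x))
      =o[atTop] fun x : ℝ => x := by
    refine hO.trans_isLittleO ?_
    exact rpow_littleO h1
  have := (ho.def (half_pos hκ)).and (eventually_ge_atTop (max x 1))
  obtain ⟨y, hy, hyx⟩ := this.exists
  have hy1 : 1 ≤ y := le_trans (le_max_right _ _) hyx
  have hfin : {m : P →₀ ℕ | (Nm N m : ℝ) ≤ y}.Finite := by
    by_contra hc
    rw [Set.Infinite.ncard hc] at hy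
    simp only [Nat.cast_zero, zero_sub, norm_neg, norm_mul, Real.norm_eq_abs] at hy
    rw [abs_of_pos hκ, abs_of_pos (by linarith)] at hy
    nlinarith
  exact hfin.subset fun m hm => le_trans hm (le_trans (le_max_left _ _) hyx)

lemma II_nonneg {P : Type*} (N : P → ℕ) (x : ℝ) : 0 ≤ II N x := by unfold II; positivity

lemma II_mono {P : Type*} {N : P → ℕ} {κ θ : ℝ} (hs : StarCond N κ θ) {x y : ℝ} (hxy : x ≤ y) :
    II N x ≤ II N y := by
  unfold II
  exact_mod_cast Set.ncard_le_ncard (fun m (hm : (Nm N m : ℝ) ≤ x) => le_trans hm hxy)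
    (fin_of_star hs y)

lemma II_bound {P : Type*} {N : P → ℕ} {κ θ : ℝ} (hs : StarCond N κ θ) :
    ∃ C : ℝ, 0 < C ∧ ∀ x : ℝ, 1 ≤ x → |II N x - κ * x| ≤ C * x ^ θ := by
  have hs' := hs
  obtain ⟨hκ, h0, h1, hO⟩ := hs'
  obtain ⟨C, hC, hb⟩ := hO.exists_pos
  rw [IsBigOWith] at hb
  obtain ⟨X, hX⟩ := eventually_atTop.1 hb
  refine ⟨C + (II N X + κ * |X|), ?_, ?_⟩
  · have := II_nonneg N X
    positivity
  · intro x hx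
    have hxt : 1 ≤ x ^ θ := Real.one_le_rpow hx h0
    have hI := II_nonneg N X
    have hI' := II_nonneg N x
    have hK : 0 ≤ κ * |X| := by positivity
    by_cases hxX : X ≤ x
    · have := hX x hxX
      rw [Real.norm_eq_abs, Real.norm_eq_abs, abs_of_pos (by linarith : 0 < x ^ θ)] at this
      refine this.trans ?_
      nlinarith
    · push Not at hxX
      have h2 := II_mono hs hxX.le
      have h3 : κ * x ≤ κ * |X| := mul_le_mul_of_nonneg_left (hxX.le.trans (le_abs_self _)) hκ.le
      have h4 : 0 ≤ κ * x := by positivity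
      have : |II N x - κ * x| ≤ II N X + κ * |X| := by
        rw [abs_le]; constructor <;> linarith
      refine this.trans ?_
      nlinarith

lemma II_zero {P : Type*} {N : P → ℕ} (hN : ∀ p, 2 ≤ N p) {x : ℝ} (hx : x < 1) : II N x = 0 := by
  unfold II
  have : {m : P →₀ ℕ | (Nm N m : ℝ) ≤ x} = ∅ := by
    ext m
    simp only [Set.mem_ofPred_eq, Set.mem_empty_iff_false, iff_false, not_le]
    have : (1 : ℝ) ≤ Nm N m := by exact_mod_cast Nm_pos hN m
    linarith
  simp [this]

lemma II_le {P : Type*} {N : P → ℕ} {κ θ : ℝ} (hN : ∀ p, 2 ≤ N p) (hs : StarCond N κ θ) :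
    ∃ C : ℝ, 0 < C ∧ ∀ x : ℝ, 0 ≤ x → II N x ≤ C * x := by
  obtain ⟨C, hC, hb⟩ := II_bound hs
  obtain ⟨hκ, h0, h1, hO⟩ := hs
  refine ⟨κ + C, by positivity, fun x hx => ?_⟩
  by_cases h : x < 1
  · rw [II_zero hN h]; positivity
  · push Not at h
    have := (abs_le.1 (hb x h)).2
    have h2 : x ^ θ ≤ x := by
      calc x ^ θ ≤ x ^ (1:ℝ) := Real.rpow_le_rpow_of_exponent_le h h1.le
        _ = x := Real.rpow_one x
    nlinarith

lemma II_tendsto {P : Type*} {N : P → ℕ} {κ θ : ℝ} (hs : StarCond N κ θ) :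
    Tendsto (fun x : ℝ => II N x / x) atTop (𝓝 κ) := by
  obtain ⟨hκ, h0, h1, hO⟩ := hs
  have ho : (fun x : ℝ => (II N x - κ * x)) =o[atTop] fun x : ℝ => x := by
    refine hO.trans_isLittleO ?_
    exact rpow_littleO h1
  have := ho.tendsto_div_nhds_zero
  have h2 := this.add_const κ
  rw [zero_add] at h2
  refine h2.congr' ?_
  filter_upwards [eventually_gt_atTop 0] with x hx
  field_simp
  ring

lemma sum_card_eq {P : Type*} {N : P → ℕ} {κ θ : ℝ} (hN : ∀ p, 2 ≤ N p) (hs : StarCond N κ θ)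
    (n : ℕ) : ∑ k ∈ Finset.Icc 1 n, (Nat.card {m : P →₀ ℕ // Nm N m = k} : ℝ) = II N n := by
  have hf := fin_of_star hs (n : ℝ)
  unfold II
  rw [Set.ncard_eq_toFinset_card _ hf,
    Finset.card_eq_sum_card_fiberwise (f := Nm N) (t := Finset.Icc 1 n)]
  · push_cast
    refine Finset.sum_congr rfl fun k hk => ?_
    norm_cast
    rw [← Nat.card_eq_finsetCard]
    refine Nat.card_congr (Equiv.subtypeEquivRight fun m => ?_)
    simp only [Finset.mem_filter, Set.Finite.mem_toFinset, Set.mem_ofPred_eq]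
    have := (Finset.mem_Icc.1 hk).2
    constructor
    · intro h; exact ⟨by omega, h⟩
    · intro h; exact h.2
  · intro m hm
    simp only [Set.Finite.coe_toFinset, Set.mem_ofPred_eq, Nat.cast_le] at hm
    simp only [Finset.coe_Icc, Set.mem_Icc]
    exact ⟨Nm_pos hN m, hm⟩

lemma fiber_fin {P : Type*} {N : P → ℕ} {κ θ : ℝ} (hs : StarCond N κ θ) (n : ℕ) :
    Finite {m : P →₀ ℕ // Nm N m = n} := by
  refine Set.Finite.subset (fin_of_star hs (n : ℝ)) ?_
  intro m hm
  have : Nm N m = n := hm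
  simp [this]

lemma coef_tendsto {P : Type*} {N : P → ℕ} {κ θ : ℝ} (hN : ∀ p, 2 ≤ N p) (hs : StarCond N κ θ) :
    Tendsto (fun n : ℕ => (∑ k ∈ Finset.Icc 1 n, (Nat.card {m : P →₀ ℕ // Nm N m = k} : ℝ)) / (n : ℝ))
      atTop (𝓝 κ) := by
  simp_rw [sum_card_eq hN hs]
  exact (II_tendsto hs).comp tendsto_natCast_atTop_atTop

lemma term_eq {c : ℕ → ℝ} (h0 : c 0 = 0) (s : ℝ) (n : ℕ) :
    LSeries.term (fun n => (c n : ℂ)) (s : ℂ) n = ((c n * (n : ℝ) ^ (-s) : ℝ) : ℂ) := by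
  rcases Nat.eq_zero_or_pos n with rfl | hn
  · simp [h0]
  · rw [LSeries.term_of_ne_zero hn.ne', Complex.ofReal_mul, Complex.ofReal_cpow (by positivity)]
    push_cast
    rw [Complex.cpow_neg]
    rfl

lemma card_zero {P : Type*} {N : P → ℕ} (hN : ∀ p, 2 ≤ N p) :
    Nat.card {m : P →₀ ℕ // Nm N m = 0} = 0 := by
  have : IsEmpty {m : P →₀ ℕ // Nm N m = 0} := ⟨fun m => by
    have := Nm_pos hN m.1
    have := m.2
    omega⟩
  simp

lemma coef_summable {P : Type*} {N : P → ℕ} {κ θ : ℝ} (hN : ∀ p, 2 ≤ N p) (hs : StarCond N κ θ)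
    {s : ℝ} (h1 : 1 < s) :
    Summable fun n : ℕ => (Nat.card {m : P →₀ ℕ // Nm N m = n} : ℝ) * (n : ℝ) ^ (-s) := by
  have := LSeriesSummable_of_sum_norm_bigO_and_nonneg (s := (s : ℂ)) (r := 1)
    (f := fun k => (Nat.card {m : P →₀ ℕ // Nm N m = k} : ℝ))
    (isBigO_atTop_natCast_rpow_of_tendsto_div_rpow (by simpa using coef_tendsto hN hs))
    (fun _ => by positivity) zero_le_one (by simpa using h1)
  unfold LSeriesSummable at this
  have h2 : LSeries.term (fun n => ((Nat.card {m : P →₀ ℕ // Nm N m = n} : ℝ) : ℂ)) (s : ℂ)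
      = fun n : ℕ => (((Nat.card {m : P →₀ ℕ // Nm N m = n} : ℝ) * (n : ℝ) ^ (-s) : ℝ) : ℂ) :=
    funext fun n => term_eq (c := fun n => (Nat.card {m : P →₀ ℕ // Nm N m = n} : ℝ))
      (by simp only [card_zero hN, Nat.cast_zero]) s n
  rw [h2] at this
  exact_mod_cast this

/-- zeta -/
def Z {P : Type*} (N : P → ℕ) (s : ℝ) : ℝ := ∑' m : P →₀ ℕ, (Nm N m : ℝ) ^ (-s)

lemma Z_summable_eq {P : Type*} {N : P → ℕ} {κ θ : ℝ} (hN : ∀ p, 2 ≤ N p) (hs : StarCond N κ θ)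
    {s : ℝ} (h1 : 1 < s) :
    (Summable fun m : P →₀ ℕ => (Nm N m : ℝ) ^ (-s)) ∧
      Z N s = ∑' n : ℕ, (Nat.card {m : P →₀ ℕ // Nm N m = n} : ℝ) * (n : ℝ) ^ (-s) := by
  have inner : ∀ n : ℕ, ∑' (m : {m : P →₀ ℕ // Nm N m = n}), (Nm N m.1 : ℝ) ^ (-s) =
      (Nat.card {m : P →₀ ℕ // Nm N m = n} : ℝ) * (n : ℝ) ^ (-s) := by
    intro n
    rw [tsum_congr (g := fun _ => (n : ℝ) ^ (-s)) (fun m => by rw [m.2]), tsum_const, nsmul_eq_mul]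
  have hsum : Summable fun q : (Σ n : ℕ, {m : P →₀ ℕ // Nm N m = n}) =>
      (Nm N q.2.1 : ℝ) ^ (-s) := by
    rw [summable_sigma_of_nonneg (fun _ => by positivity)]
    constructor
    · intro n
      have := fiber_fin hs (N := N) n
      exact Summable.of_finite
    · simp_rw [inner]
      exact coef_summable hN hs h1
  constructor
  · rw [← (Equiv.sigmaFiberEquiv (Nm N)).summable_iff]
    exact hsum
  · unfold Z
    rw [← (Equiv.sigmaFiberEquiv (Nm N)).tsum_eq]
    have := hsum.tsum_sigma
    simp_rw [inner] at this
    exact this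

lemma Z_tendsto {P : Type*} {N : P → ℕ} {κ θ : ℝ} (hN : ∀ p, 2 ≤ N p) (hs : StarCond N κ θ) :
    Tendsto (fun s : ℝ => (s - 1) * Z N s) (𝓝[>] 1) (𝓝 κ) := by
  have := LSeries_tendsto_sub_mul_nhds_one_of_tendsto_sum_div_and_nonneg
    (fun k => (Nat.card {m : P →₀ ℕ // Nm N m = k} : ℝ)) (coef_tendsto hN hs)
    (fun _ => by positivity)
  rw [← tendsto_ofReal_iff]
  refine this.congr' ?_
  filter_upwards [self_mem_nhdsWithin] with s h1
  have h1 : 1 < s := h1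
  rw [(Z_summable_eq hN hs h1).2]
  rw [Complex.ofReal_mul, Complex.ofReal_sub, Complex.ofReal_one, Complex.ofReal_tsum]
  congr 1
  unfold LSeries
  have h2 : LSeries.term (fun n => ((Nat.card {m : P →₀ ℕ // Nm N m = n} : ℝ) : ℂ)) (s : ℂ)
      = fun n : ℕ => (((Nat.card {m : P →₀ ℕ // Nm N m = n} : ℝ) * (n : ℝ) ^ (-s) : ℝ) : ℂ) :=
    funext fun n => term_eq (c := fun n => (Nat.card {m : P →₀ ℕ // Nm N m = n} : ℝ))
      (by simp only [card_zero hN, Nat.cast_zero]) s n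
  rw [h2]

lemma single_inj {P : Type*} : Function.Injective (fun p : P => Finsupp.single p (1 : ℕ)) :=
  Finsupp.single_left_injective one_ne_zero

lemma prime_summable {P : Type*} {N : P → ℕ} {κ θ : ℝ} (hN : ∀ p, 2 ≤ N p) (hs : StarCond N κ θ)
    {s : ℝ} (h1 : 1 < s) : Summable fun p : P => (N p : ℝ) ^ (-s) := by
  have := (Z_summable_eq hN hs h1).1.comp_injective (single_inj (P := P))
  refine this.congr fun p => ?_
  simp [Nm_single]

lemma euler_lower {P : Type*} {N : P → ℕ} {κ θ : ℝ} (hN : ∀ p, 2 ≤ N p) (hs : StarCond N κ θ)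
    {s : ℝ} (h1 : 1 < s) (F : Finset P) : ∏ p ∈ F, (1 + (N p : ℝ) ^ (-s)) ≤ Z N s := by
  rw [Finset.prod_one_add]
  let e : Finset P → (P →₀ ℕ) := fun t => ∑ p ∈ t, Finsupp.single p 1
  have he : ∀ t p, e t p = if p ∈ t then 1 else 0 := by
    intro t p
    simp only [e, Finsupp.finsetSum_apply, Finsupp.single_apply]
    simp
  have hinj : Function.Injective e := by
    intro t t' htt
    ext p
    have := DFunLike.congr_fun htt p
    rw [he, he] at this
    by_cases h1 : p ∈ t <;> by_cases h2 : p ∈ t' <;> simp_all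
  have hterm : ∀ t, ∏ p ∈ t, (N p : ℝ) ^ (-s) = (Nm N (e t) : ℝ) ^ (-s) := by
    intro t
    simp only [e, Nm_sum, Nm_single, pow_one]
    push_cast
    rw [Real.finsetProd_rpow _ _ (fun _ _ => by positivity)]
  simp_rw [hterm]
  rw [← Finset.sum_image (f := fun m => (Nm N m : ℝ) ^ (-s)) (fun _ _ _ _ h => hinj h)]
  exact (Z_summable_eq hN hs h1).1.sum_le_tsum _ (fun _ _ => by positivity)

lemma u_le {n : ℕ} (hn : 2 ≤ n) {s : ℝ} (h1 : 1 < s) : (n : ℝ) ^ (-s) ≤ 1 / 2 := by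
  have h2 : (2 : ℝ) ≤ n := by exact_mod_cast hn
  calc (n : ℝ) ^ (-s) ≤ (n : ℝ) ^ (-1 : ℝ) :=
        Real.rpow_le_rpow_of_exponent_le (by linarith) (by linarith)
    _ = (n : ℝ)⁻¹ := by rw [Real.rpow_neg_one]
    _ ≤ 1 / 2 := by rw [one_div]; exact inv_anti₀ (by norm_num) h2

lemma u_sq_le {n : ℕ} (hn : 2 ≤ n) {s : ℝ} (h1 : 1 < s) :
    ((n : ℝ) ^ (-s)) ^ 2 ≤ (n : ℝ) ^ (-2 : ℝ) := by
  have h2 : (2 : ℝ) ≤ n := by exact_mod_cast hn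
  rw [← Real.rpow_natCast, ← Real.rpow_mul (by linarith)]
  exact Real.rpow_le_rpow_of_exponent_le (by linarith) (by push_cast; linarith)

lemma euler_upper_aux {P : Type*} {N : P → ℕ} (hN : ∀ p, 2 ≤ N p)
    {s : ℝ} (h1 : 1 < s) (F : Finset P) : ∀ T : Finset (P →₀ ℕ), (∀ m ∈ T, m.support ⊆ F) →
      ∑ m ∈ T, (Nm N m : ℝ) ^ (-s) ≤ ∏ p ∈ F, (1 - (N p : ℝ) ^ (-s))⁻¹ := by
  induction F using Finset.induction_on with
  | empty =>
    intro T hT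
    have : T ⊆ {0} := by
      intro m hm
      have := hT m hm
      simpa using this
    calc ∑ m ∈ T, (Nm N m : ℝ) ^ (-s) ≤ ∑ m ∈ {0}, (Nm N m : ℝ) ^ (-s) :=
          Finset.sum_le_sum_of_subset_of_nonneg this (fun _ _ _ => by positivity)
      _ ≤ _ := by simp [Nm_zero]
  | insert p F hp ih =>
    intro T hT
    set u := (N p : ℝ) ^ (-s) with hu
    have hu0 : 0 ≤ u := by positivity
    have hu1 : u ≤ 1 / 2 := u_le (hN p) h1
    let φ : (P →₀ ℕ) → ℕ × (P →₀ ℕ) := fun m => (m p, m.erase p)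
    have hφ : ∀ m : P →₀ ℕ, Finsupp.single p (m p) + m.erase p = m := fun m =>
      Finsupp.single_add_erase p m
    have hinj : Function.Injective φ := by
      intro m m' h
      rw [← hφ m, ← hφ m']
      simp only [φ, Prod.mk.injEq] at h
      rw [h.1, h.2]
    have hterm : ∀ m : P →₀ ℕ, (Nm N m : ℝ) ^ (-s) = u ^ (φ m).1 * (Nm N (φ m).2 : ℝ) ^ (-s) := by
      intro m
      conv_lhs => rw [← hφ m, Nm_add, Nm_single]
      push_cast
      rw [Real.mul_rpow (by positivity) (by positivity), hu, ← Real.rpow_natCast,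
        ← Real.rpow_natCast, ← Real.rpow_mul (by positivity), ← Real.rpow_mul (by positivity)]
      simp only [φ]
      rw [mul_comm (-s)]
    set K := T.image (fun m => m p)
    set T' := T.image (fun m => m.erase p)
    have hT' := ih T' (by
      intro m hm
      obtain ⟨m0, hm0, rfl⟩ := Finset.mem_image.1 hm
      rw [Finsupp.support_erase]
      intro q hq
      have h1 := Finset.mem_erase.1 hq
      exact (Finset.mem_insert.1 (hT m0 hm0 h1.2)).resolve_left h1.1)
    rw [Finset.prod_insert hp]
    calc ∑ m ∈ T, (Nm N m : ℝ) ^ (-s)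
        = ∑ q ∈ T.image φ, u ^ q.1 * (Nm N q.2 : ℝ) ^ (-s) := by
          rw [Finset.sum_image (fun _ _ _ _ h => hinj h)]
          exact Finset.sum_congr rfl fun m _ => hterm m
      _ ≤ ∑ q ∈ K ×ˢ T', u ^ q.1 * (Nm N q.2 : ℝ) ^ (-s) := by
          refine Finset.sum_le_sum_of_subset_of_nonneg ?_ (fun _ _ _ => by positivity)
          intro q hq
          obtain ⟨m, hm, rfl⟩ := Finset.mem_image.1 hq
          exact Finset.mem_product.2 ⟨Finset.mem_image_of_mem _ hm, Finset.mem_image_of_mem _ hm⟩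
      _ = (∑ k ∈ K, u ^ k) * ∑ m ∈ T', (Nm N m : ℝ) ^ (-s) := by
          rw [Finset.sum_product, Finset.sum_mul_sum]
      _ ≤ (1 - u)⁻¹ * _ := by
          refine mul_le_mul ?_ hT' (Finset.sum_nonneg fun _ _ => by positivity) (by
            rw [inv_nonneg]; linarith)
          rw [← tsum_geometric_of_lt_one hu0 (by linarith)]
          exact (summable_geometric_of_lt_one hu0 (by linarith)).sum_le_tsum _
            (fun _ _ => by positivity)

/-- prime zeta -/
def PZ {P : Type*} (N : P → ℕ) (s : ℝ) : ℝ := ∑' p : P, (N p : ℝ) ^ (-s)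

lemma Z_le {P : Type*} {N : P → ℕ} {κ θ : ℝ} (hN : ∀ p, 2 ≤ N p) (hs : StarCond N κ θ)
    {s : ℝ} (h1 : 1 < s) : Z N s ≤ Real.exp (PZ N s + 2 * PZ N 2) := by
  refine (Z_summable_eq hN hs h1).1.tsum_le_of_sum_le fun T => ?_
  refine (euler_upper_aux hN h1 (T.biUnion fun m => m.support) T
    (fun m hm => Finset.subset_biUnion_of_mem (fun m : P →₀ ℕ => m.support) hm)).trans ?_
  set F := T.biUnion fun m => m.support
  calc ∏ p ∈ F, (1 - (N p : ℝ) ^ (-s))⁻¹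
      ≤ ∏ p ∈ F, Real.exp ((N p : ℝ) ^ (-s) + 2 * (N p : ℝ) ^ (-2 : ℝ)) := by
        refine Finset.prod_le_prod (fun p _ => ?_) (fun p _ => ?_)
        · have := u_le (hN p) h1
          rw [inv_nonneg]; linarith
        · have h2 := u_le (hN p) h1
          have h3 := u_sq_le (hN p) h1
          set u := (N p : ℝ) ^ (-s)
          have hu0 : 0 ≤ u := by positivity
          have e1 : (1 - u)⁻¹ = u / (1 - u) + 1 := by
            have : 1 - u ≠ 0 := by linarith
            field_simp
            ring
          rw [e1]
          refine (Real.add_one_le_exp _).trans (Real.exp_le_exp.2 ?_)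
          have : u / (1 - u) ≤ u + 2 * u ^ 2 := by
            rw [div_le_iff₀ (by linarith)]
            nlinarith [mul_nonneg (sq_nonneg u) (by linarith : 0 ≤ 1 - 2 * u)]
          linarith
    _ = Real.exp (∑ p ∈ F, (N p : ℝ) ^ (-s) + 2 * ∑ p ∈ F, (N p : ℝ) ^ (-2 : ℝ)) := by
        rw [← Real.exp_sum, Finset.sum_add_distrib, Finset.mul_sum]
    _ ≤ _ := by
        apply Real.exp_le_exp.2
        have a := (prime_summable hN hs h1).sum_le_tsum F (fun _ _ => by positivity)
        have b := (prime_summable hN hs one_lt_two).sum_le_tsum F (fun _ _ => by positivity)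
        unfold PZ
        linarith

lemma le_Z {P : Type*} {N : P → ℕ} {κ θ : ℝ} (hN : ∀ p, 2 ≤ N p) (hs : StarCond N κ θ)
    {s : ℝ} (h1 : 1 < s) : PZ N s ≤ Real.log (Z N s) + PZ N 2 := by
  refine (prime_summable hN hs h1).tsum_le_of_sum_le fun F => ?_
  have h := euler_lower hN hs h1 F
  have b := (prime_summable hN hs one_lt_two).sum_le_tsum F (fun _ _ => by positivity)
  have h2 : Real.exp (∑ p ∈ F, ((N p : ℝ) ^ (-s) - (N p : ℝ) ^ (-2 : ℝ))) ≤ Z N s := by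
    refine le_trans ?_ h
    rw [Real.exp_sum]
    refine Finset.prod_le_prod (fun _ _ => by positivity) fun p _ => ?_
    have h3 := u_sq_le (hN p) h1
    set u := (N p : ℝ) ^ (-s)
    have hu0 : 0 ≤ u := by positivity
    have e1 := Real.add_one_le_exp (-(u / (1 + u)))
    have e2 : -(u / (1 + u)) + 1 = (1 + u)⁻¹ := by field_simp; ring
    rw [e2, Real.exp_neg] at e1
    have e3 := (inv_le_inv₀ (by positivity) (by positivity)).1 e1
    refine le_trans (Real.exp_le_exp.2 ?_) e3
    rw [le_div_iff₀ (by positivity)]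
    nlinarith [pow_nonneg hu0 3]
  have h3 := Real.log_le_log (Real.exp_pos _) h2
  rw [Real.log_exp, Finset.sum_sub_distrib] at h3
  unfold PZ
  linarith

lemma PZ_near {P : Type*} {N : P → ℕ} {κ θ : ℝ} (hN : ∀ p, 2 ≤ N p) (hs : StarCond N κ θ) :
    ∃ C : ℝ, ∀ᶠ s : ℝ in 𝓝[>] 1, |PZ N s + Real.log (s - 1)| ≤ C := by
  have hκ := hs.1
  have hZ := Z_tendsto hN hs
  have h1 := hZ.eventually (lt_mem_nhds (show κ / 2 < κ by linarith))
  have h2 := hZ.eventually (gt_mem_nhds (show κ < 2 * κ by linarith))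
  have hD : 0 ≤ PZ N 2 := tsum_nonneg fun _ => by positivity
  refine ⟨|Real.log (κ / 2)| + |Real.log (2 * κ)| + 2 * PZ N 2, ?_⟩
  filter_upwards [h1, h2, self_mem_nhdsWithin] with s h1 h2 h3
  have h3 : 1 < s := h3
  have hs1 : 0 < s - 1 := by linarith
  have hZpos : 0 < Z N s := by
    by_contra hc
    push Not at hc
    nlinarith
  have l1 : Real.log (κ / 2) ≤ Real.log (s - 1) + Real.log (Z N s) := by
    rw [← Real.log_mul hs1.ne' hZpos.ne']
    exact Real.log_le_log (by linarith) h1.le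
  have l2 : Real.log (s - 1) + Real.log (Z N s) ≤ Real.log (2 * κ) := by
    rw [← Real.log_mul hs1.ne' hZpos.ne']
    exact Real.log_le_log (by positivity) h2.le
  have l3 := le_Z hN hs h3
  have l4 : Real.log (Z N s) ≤ PZ N s + 2 * PZ N 2 := by
    have := Real.log_le_log hZpos (Z_le hN hs h3)
    rwa [Real.log_exp] at this
  rw [abs_le]
  have a1 := neg_abs_le (Real.log (κ / 2))
  have a2 := le_abs_self (Real.log (2 * κ))
  have a3 := abs_nonneg (Real.log (κ / 2))
  have a4 := abs_nonneg (Real.log (2 * κ))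
  constructor <;> linarith

lemma PZ_log {P : Type*} {N : P → ℕ} {κ θ : ℝ} (hN : ∀ p, 2 ≤ N p) (hs : StarCond N κ θ)
    {A : ℝ} (hA : 0 < A) :
    ∃ C : ℝ, ∀ᶠ y : ℝ in atTop, |PZ N (1 + A / Real.log y) - Real.log (Real.log y)| ≤ C := by
  obtain ⟨C, hC⟩ := PZ_near hN hs
  refine ⟨C + |Real.log A|, ?_⟩
  have ht : Tendsto (fun y : ℝ => 1 + A / Real.log y) atTop (𝓝[>] 1) := by
    rw [tendsto_nhdsWithin_iff]
    constructor
    · simpa using (Real.tendsto_log_atTop.const_div_atTop A).const_add 1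
    · filter_upwards [eventually_gt_atTop 1] with y hy
      have := Real.log_pos hy
      simp only [Set.mem_Ioi, lt_add_iff_pos_right]
      positivity
  filter_upwards [ht.eventually hC, eventually_gt_atTop 1] with y h1 h2
  have hl := Real.log_pos h2
  rw [add_sub_cancel_left, Real.log_div hA.ne' hl.ne'] at h1
  have := abs_sub (PZ N (1 + A / Real.log y) + (Real.log A - Real.log (Real.log y))) (Real.log A)
  calc |PZ N (1 + A / Real.log y) - Real.log (Real.log y)|
      = |PZ N (1 + A / Real.log y) + (Real.log A - Real.log (Real.log y)) - Real.log A| := by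
        congr 1; ring
    _ ≤ _ := by linarith

/-- primes up to z -/
def Q {P : Type*} (N : P → ℕ) (z : ℝ) : Finset P :=
  if h : {p : P | (N p : ℝ) ≤ z}.Finite then h.toFinset else ∅

lemma Q_fin {P : Type*} {N : P → ℕ} {κ θ : ℝ} (hs : StarCond N κ θ) (z : ℝ) :
    {p : P | (N p : ℝ) ≤ z}.Finite := by
  have := (fin_of_star hs z).preimage (f := fun p : P => Finsupp.single p (1 : ℕ))
    (single_inj.injOn)
  refine this.subset fun p hp => ?_
  simpa [Nm_single] using hp

lemma mem_Q {P : Type*} {N : P → ℕ} {κ θ : ℝ} (hs : StarCond N κ θ) {z : ℝ} {p : P} :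
    p ∈ Q N z ↔ (N p : ℝ) ≤ z := by
  unfold Q
  rw [dif_pos (Q_fin hs z)]
  simp

/-- sum of reciprocals -/
def SS {P : Type*} (N : P → ℕ) (z : ℝ) : ℝ := ∑ p ∈ Q N z, 1 / (N p : ℝ)

lemma rpow_split {n : ℕ} (hn : 2 ≤ n) (A y : ℝ) :
    (n : ℝ) ^ (-(1 + A / Real.log y)) = 1 / (n : ℝ) * Real.exp (-(A * (Real.log n / Real.log y))) := by
  have : (0 : ℝ) < n := by positivity
  rw [neg_add, Real.rpow_add this, Real.rpow_neg_one, one_div, Real.rpow_def_of_pos this]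
  congr 2
  ring

lemma SS_upper {P : Type*} {N : P → ℕ} {κ θ : ℝ} (hN : ∀ p, 2 ≤ N p) (hs : StarCond N κ θ)
    {A : ℝ} (hA : 0 < A) {y : ℝ} (hy : 1 < y) :
    SS N y ≤ Real.exp A * PZ N (1 + A / Real.log y) := by
  have hl := Real.log_pos hy
  have h1 : 1 < 1 + A / Real.log y := by
    have : 0 < A / Real.log y := by positivity
    linarith
  refine le_trans ?_ (mul_le_mul_of_nonneg_left
    ((prime_summable hN hs h1).sum_le_tsum (Q N y) (fun _ _ => by positivity)) (Real.exp_pos A).le)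
  rw [Finset.mul_sum]
  refine Finset.sum_le_sum fun p hp => ?_
  have hp := (mem_Q hs).1 hp
  have hp2 : (2 : ℝ) ≤ N p := by exact_mod_cast hN p
  rw [rpow_split (hN p)]
  have : Real.log (N p) / Real.log y ≤ 1 := by
    rw [div_le_one hl]
    exact Real.log_le_log (by linarith) hp
  have h2 : 1 ≤ Real.exp A * Real.exp (-(A * (Real.log (N p) / Real.log y))) := by
    rw [← Real.exp_add]
    apply Real.one_le_exp
    nlinarith
  calc 1 / (N p : ℝ) = 1 / (N p : ℝ) * 1 := by ring
    _ ≤ 1 / (N p : ℝ) * (Real.exp A * Real.exp (-(A * (Real.log (N p) / Real.log y)))) :=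
      mul_le_mul_of_nonneg_left h2 (by positivity)
    _ = _ := by ring

lemma SS_lower {P : Type*} {N : P → ℕ} {κ θ : ℝ} (hN : ∀ p, 2 ≤ N p) (hs : StarCond N κ θ)
    {A : ℝ} (hA : 1 < A) {y : ℝ} (hy : 1 < y) :
    PZ N (1 + A / Real.log y) ≤ SS N y + Real.exp (1 - A) * PZ N (1 + 1 / Real.log y) := by
  have hl := Real.log_pos hy
  have hgt : ∀ B : ℝ, 0 < B → 1 < 1 + B / Real.log y := by
    intro B hB
    have : 0 < B / Real.log y := by positivity
    linarith
  refine (prime_summable hN hs (hgt A (by linarith))).tsum_le_of_sum_le fun F => ?_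
  have h1 : ∀ p ∈ F, (N p : ℝ) ^ (-(1 + A / Real.log y)) ≤
      (if p ∈ Q N y then 1 / (N p : ℝ) else 0) +
        Real.exp (1 - A) * (N p : ℝ) ^ (-(1 + 1 / Real.log y)) := by
    intro p _
    have hp2 : (2 : ℝ) ≤ N p := by exact_mod_cast hN p
    have hlp : 0 < Real.log (N p) := Real.log_pos (by linarith)
    have hdiv : 0 ≤ Real.log (N p) / Real.log y := by positivity
    rw [rpow_split (hN p), rpow_split (hN p)]
    split_ifs with hp
    · have : Real.exp (-(A * (Real.log (N p) / Real.log y))) ≤ 1 := by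
        rw [Real.exp_le_one_iff]
        have : 0 ≤ A * (Real.log (N p) / Real.log y) := by positivity
        linarith
      have h3 : 1 / (N p : ℝ) * Real.exp (-(A * (Real.log (N p) / Real.log y)))
          ≤ 1 / (N p : ℝ) * 1 := mul_le_mul_of_nonneg_left this (by positivity)
      have h4 : 0 ≤ Real.exp (1 - A) * (1 / (N p : ℝ) *
        Real.exp (-(1 * (Real.log (N p) / Real.log y)))) := by positivity
      linarith
    · rw [mem_Q hs] at hp
      push Not at hp
      have h5 : 1 ≤ Real.log (N p) / Real.log y := by
        rw [one_le_div hl]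
        exact Real.log_le_log (by linarith) hp.le
      rw [zero_add, mul_left_comm, ← Real.exp_add]
      refine mul_le_mul_of_nonneg_left (Real.exp_le_exp.2 ?_) (by positivity)
      nlinarith
  refine (Finset.sum_le_sum h1).trans ?_
  rw [Finset.sum_add_distrib, ← Finset.mul_sum]
  refine add_le_add ?_ (mul_le_mul_of_nonneg_left
    ((prime_summable hN hs (hgt 1 one_pos)).sum_le_tsum F (fun _ _ => by positivity))
    (Real.exp_pos _).le)
  rw [← Finset.sum_filter]
  refine Finset.sum_le_sum_of_subset_of_nonneg ?_ (fun _ _ _ => by positivity)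
  intro p hp
  exact (Finset.mem_filter.1 hp).2

lemma loglog_tendsto : Tendsto (fun y : ℝ => Real.log (Real.log y)) atTop atTop :=
  Real.tendsto_log_atTop.comp Real.tendsto_log_atTop

lemma mertens {P : Type*} {N : P → ℕ} {κ θ : ℝ} (hN : ∀ p, 2 ≤ N p) (hs : StarCond N κ θ)
    {η : ℝ} (hη : 0 < η) :
    ∀ᶠ y : ℝ in atTop, |SS N y - Real.log (Real.log y)| ≤ η * Real.log (Real.log y) := by
  set q := min (η / 2) (1 / 2) with hq
  have hq0 : 0 < q := lt_min (by linarith) (by norm_num)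
  have hq1 : q ≤ 1 / 2 := min_le_right _ _
  have hq2 : q ≤ η / 2 := min_le_left _ _
  set A := 1 - Real.log q with hA
  have hA1 : 1 < A := by
    have := Real.log_neg hq0 (by linarith)
    linarith
  have hAq : Real.exp (1 - A) = q := by
    rw [hA, sub_sub_cancel, Real.exp_log hq0]
  set B := Real.log (1 + η / 2) with hB
  have hB0 : 0 < B := Real.log_pos (by linarith)
  have hBe : Real.exp B = 1 + η / 2 := Real.exp_log (by linarith)
  obtain ⟨CA, hCA⟩ := PZ_log hN hs (by linarith : 0 < A)
  obtain ⟨CB, hCB⟩ := PZ_log hN hs hB0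
  obtain ⟨C1, hC1⟩ := PZ_log hN hs one_pos
  filter_upwards [hCA, hCB, hC1, eventually_gt_atTop 1,
    loglog_tendsto.eventually_ge_atTop ((1 + η / 2) * CB / (η / 2)),
    loglog_tendsto.eventually_ge_atTop ((CA + q * C1) / (η / 2)),
    loglog_tendsto.eventually_ge_atTop 0] with y hA hB h1 hy hL1 hL2 hL0
  set L := Real.log (Real.log y)
  have u := SS_upper hN hs hB0 hy
  have l := SS_lower hN hs hA1 hy
  rw [hAq] at l
  rw [hBe] at u
  rw [div_le_iff₀ (by linarith)] at hL1 hL2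
  have a1 := (abs_le.1 hA).1
  have b1 := (abs_le.1 hB).2
  have c1 := (abs_le.1 h1).2
  rw [abs_le]
  constructor
  · have : q * PZ N (1 + 1 / Real.log y) ≤ q * (L + C1) :=
      mul_le_mul_of_nonneg_left (by linarith) hq0.le
    have : q * L ≤ η / 2 * L := mul_le_mul_of_nonneg_right hq2 hL0
    linarith
  · have : (1 + η / 2) * PZ N (1 + B / Real.log y) ≤ (1 + η / 2) * (L + CB) :=
      mul_le_mul_of_nonneg_left (by linarith) (by linarith)
    linarith

lemma mertens_pow {P : Type*} {N : P → ℕ} {κ θ : ℝ} (hN : ∀ p, 2 ≤ N p) (hs : StarCond N κ θ)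
    {c : ℝ} (hc : 0 < c) {η : ℝ} (hη : 0 < η) :
    ∀ᶠ x : ℝ in atTop, |SS N (x ^ c) - Real.log (Real.log x)| ≤ η * Real.log (Real.log x) := by
  have h1 := (tendsto_rpow_atTop hc).eventually (mertens hN hs (half_pos hη))
  filter_upwards [h1, eventually_gt_atTop 1,
    loglog_tendsto.eventually_ge_atTop ((1 + η / 2) * |Real.log c| / (η / 2))] with x h1 hx hL
  have hl := Real.log_pos hx
  have e : Real.log (Real.log (x ^ c)) = Real.log (Real.log x) + Real.log c := by
    rw [Real.log_rpow (by linarith), Real.log_mul hc.ne' hl.ne', add_comm]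
  rw [e] at h1
  rw [div_le_iff₀ (by linarith)] at hL
  have a := le_abs_self (Real.log c)
  have b := neg_abs_le (Real.log c)
  have h2 := abs_le.1 h1
  rw [abs_le]
  constructor <;> nlinarith

/-- elements of norm up to x -/
def AA {P : Type*} (N : P → ℕ) (x : ℝ) : Finset (P →₀ ℕ) :=
  if h : {m : P →₀ ℕ | (Nm N m : ℝ) ≤ x}.Finite then h.toFinset else ∅

lemma mem_AA {P : Type*} {N : P → ℕ} {κ θ : ℝ} (hs : StarCond N κ θ) {x : ℝ} {m : P →₀ ℕ} :
    m ∈ AA N x ↔ (Nm N m : ℝ) ≤ x := by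
  unfold AA
  rw [dif_pos (fin_of_star hs x)]
  simp

lemma card_AA {P : Type*} {N : P → ℕ} {κ θ : ℝ} (hs : StarCond N κ θ) (x : ℝ) :
    ((AA N x).card : ℝ) = II N x := by
  unfold II
  rw [Set.ncard_eq_toFinset_card _ (fin_of_star hs x)]
  unfold AA
  rw [dif_pos (fin_of_star hs x)]

lemma card_div {P : Type*} {N : P → ℕ} {κ θ : ℝ} (hN : ∀ p, 2 ≤ N p) (hs : StarCond N κ θ)
    (x : ℝ) (d : P →₀ ℕ) :
    (((AA N x).filter (fun a => d ≤ a)).card : ℝ) = II N (x / Nm N d) := by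
  rw [← card_AA hs]
  have hd : (0 : ℝ) < Nm N d := by exact_mod_cast Nm_pos hN d
  congr 1
  symm
  refine Finset.card_bij (fun a _ => a + d) ?_ ?_ ?_
  · intro a ha
    rw [mem_AA hs, le_div_iff₀ hd] at ha
    rw [Finset.mem_filter, mem_AA hs, Nm_add]
    push_cast
    exact ⟨ha, le_add_self⟩
  · intro a _ b _ h
    exact add_right_cancel h
  · intro b hb
    rw [Finset.mem_filter, mem_AA hs] at hb
    refine ⟨b - d, ?_, tsub_add_cancel_of_le hb.2⟩
    rw [mem_AA hs, le_div_iff₀ hd]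
    have := Nm_add N (b - d) d
    rw [tsub_add_cancel_of_le hb.2] at this
    rw [this] at hb
    push_cast at hb
    exact hb.1

/-- indicator of p dividing a -/
def dv {P : Type*} (p : P) (a : P →₀ ℕ) : ℝ := if a p ≠ 0 then 1 else 0

lemma sum_dv {P : Type*} {N : P → ℕ} {κ θ : ℝ} (hN : ∀ p, 2 ≤ N p) (hs : StarCond N κ θ)
    (x : ℝ) (p : P) : ∑ a ∈ AA N x, dv p a = II N (x / N p) := by
  have := card_div hN hs x (Finsupp.single p 1)
  rw [Nm_single, pow_one] at this
  rw [← this]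
  simp only [dv]
  rw [Finset.sum_boole]
  congr 2
  refine Finset.filter_congr fun a _ => ?_
  rw [Finsupp.single_le_iff]
  omega

lemma sum_dv_dv {P : Type*} {N : P → ℕ} {κ θ : ℝ} (hN : ∀ p, 2 ≤ N p) (hs : StarCond N κ θ)
    (x : ℝ) {p q : P} (hpq : p ≠ q) :
    ∑ a ∈ AA N x, dv p a * dv q a = II N (x / (N p * N q)) := by
  have := card_div hN hs x (Finsupp.single p 1 + Finsupp.single q 1)
  rw [Nm_add, Nm_single, Nm_single, pow_one, pow_one] at this
  push_cast at this
  rw [← this]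
  simp only [dv, ite_mul, one_mul, zero_mul, ← ite_and]
  rw [Finset.sum_boole]
  congr 2
  refine Finset.filter_congr fun a _ => ?_
  constructor
  · rintro ⟨h1, h2⟩ r
    simp only [Finsupp.add_apply, Finsupp.single_apply]
    split_ifs with h3 h4 h4
    · exact absurd (h3.trans h4.symm) hpq
    · subst h3; omega
    · subst h4; omega
    · omega
  · intro h
    have h1 := h p
    have h2 := h q
    simp only [Finsupp.add_apply, Finsupp.single_apply, if_true] at h1 h2
    omega

lemma turan {P : Type*} {N : P → ℕ} {κ θ : ℝ} (hN : ∀ p, 2 ≤ N p) (hs : StarCond N κ θ) :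
    ∃ K : ℝ, 0 < K ∧ ∀ x : ℝ, 1 ≤ x →
      ∑ a ∈ AA N x, ((∑ p ∈ Q N (x ^ ((1 - θ) / 3)), dv p a) - SS N (x ^ ((1 - θ) / 3))) ^ 2
        ≤ x * (κ * SS N (x ^ ((1 - θ) / 3)) + K) := by
  obtain ⟨C, hC, hb⟩ := II_bound hs
  obtain ⟨D, hD, hd⟩ := II_le hN hs
  obtain ⟨hκ, h0, h1, -⟩ := id hs
  refine ⟨5 * C * D ^ 2, by positivity, fun x hx => ?_⟩
  set c := (1 - θ) / 3 with hc
  have hc0 : 0 < c := by rw [hc]; linarith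
  set z := x ^ c with hz
  set S := SS N z with hS
  have hx0 : 0 < x := by linarith
  have hz1 : 1 ≤ z := Real.one_le_rpow hx hc0.le
  have hz2 : z * z ≤ x := by
    rw [hz, ← Real.rpow_add hx0]
    calc x ^ (c + c) ≤ x ^ (1 : ℝ) := Real.rpow_le_rpow_of_exponent_le hx (by rw [hc]; linarith)
      _ = x := Real.rpow_one x
  set n : ℝ := ((Q N z).card : ℝ) with hn
  have hn0 : 0 ≤ n := by positivity
  have hnn : n ≤ n ^ 2 := by
    rw [hn]
    exact_mod_cast Nat.le_self_pow two_ne_zero _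
  have hnz : n ≤ D * z := by
    refine le_trans ?_ (hd z (by linarith))
    rw [← card_AA hs, hn]
    have : (Q N z).card ≤ (AA N z).card := by
      refine Finset.card_le_card_of_injOn (fun p => Finsupp.single p 1) ?_ single_inj.injOn
      intro p hp
      have := (mem_Q hs).1 (Finset.mem_coe.1 hp)
      rw [Finset.mem_coe, mem_AA hs, Nm_single, pow_one]
      exact this
    exact_mod_cast this
  have hS0 : 0 ≤ S := Finset.sum_nonneg fun _ _ => by positivity
  have hNp : ∀ p ∈ Q N z, (1 : ℝ) ≤ N p ∧ (N p : ℝ) ≤ z := fun p hp =>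
    ⟨by have := hN p; exact_mod_cast (by omega : 1 ≤ N p), (mem_Q hs).1 hp⟩
  have hSn : S ≤ n := by
    rw [hS, SS, hn, Finset.card_eq_sum_ones]
    push_cast
    refine Finset.sum_le_sum fun p hp => ?_
    rw [div_le_one (by linarith [(hNp p hp).1])]
    exact (hNp p hp).1
  set E := C * x ^ θ with hE
  have hE0 : 0 ≤ E := by positivity
  -- general bound
  have gen : ∀ y : ℝ, 1 ≤ y → y ≤ x → |II N (x / y) - κ * x / y| ≤ E := by
    intro y hy1 hyx
    have hxy : 1 ≤ x / y := by rw [one_le_div (by linarith)]; exact hyx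
    have := hb (x / y) hxy
    rw [← mul_div_assoc] at this
    refine this.trans (mul_le_mul_of_nonneg_left ?_ hC.le)
    refine Real.rpow_le_rpow (by positivity) ?_ h0
    exact div_le_self hx0.le hy1
  have m0 : ((AA N x).card : ℝ) ≤ κ * x + E := by
    rw [card_AA hs]
    have := (abs_le.1 (hb x hx)).2
    linarith
  have m1 : κ * x * S - n * E ≤ ∑ p ∈ Q N z, ∑ a ∈ AA N x, dv p a := by
    have : κ * x * S - n * E = ∑ p ∈ Q N z, (κ * x * (1 / (N p : ℝ)) - E) := by
      rw [Finset.sum_sub_distrib, ← Finset.mul_sum, Finset.sum_const, nsmul_eq_mul]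
      rfl
    rw [this]
    refine Finset.sum_le_sum fun p hp => ?_
    rw [sum_dv hN hs]
    obtain ⟨a1, a2⟩ := hNp p hp
    have := (abs_le.1 (gen (N p) a1 (by nlinarith))).1
    have e : κ * x * (1 / (N p : ℝ)) = κ * x / N p := by ring
    linarith
  have m2 : ∑ p ∈ Q N z, ∑ q ∈ Q N z, ∑ a ∈ AA N x, dv p a * dv q a
      ≤ κ * x * S ^ 2 + n ^ 2 * E + (κ * x * S + n * E) := by
    have key : ∀ p ∈ Q N z, ∀ q ∈ Q N z, ∑ a ∈ AA N x, dv p a * dv q a ≤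
        (κ * x * ((1 / (N p : ℝ)) * (1 / (N q : ℝ))) + E) +
          (if p = q then (κ * x * (1 / (N p : ℝ)) + E) else 0) := by
      intro p hp q hq
      obtain ⟨a1, a2⟩ := hNp p hp
      obtain ⟨b1, b2⟩ := hNp q hq
      split_ifs with hpq
      · subst hpq
        have e : ∀ a : P →₀ ℕ, dv p a * dv p a = dv p a := by
          intro a; unfold dv; split_ifs <;> simp
        simp_rw [e]
        rw [sum_dv hN hs]
        have := (abs_le.1 (gen (N p) a1 (by nlinarith))).2
        have e : κ * x * (1 / (N p : ℝ)) = κ * x / N p := by ring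
        have : 0 ≤ κ * x * ((1 / (N p : ℝ)) * (1 / (N p : ℝ))) := by positivity
        linarith
      · rw [sum_dv_dv hN hs x hpq, add_zero]
        have := (abs_le.1 (gen (N p * N q) (by nlinarith) (by nlinarith))).2
        have e : κ * x * ((1 / (N p : ℝ)) * (1 / (N q : ℝ))) = κ * x / (N p * N q) := by
          field_simp
        linarith
    refine (Finset.sum_le_sum fun p hp => Finset.sum_le_sum fun q hq => key p hp q hq).trans
      (le_of_eq ?_)
    simp only [Finset.sum_add_distrib, Finset.sum_const, nsmul_eq_mul, Finset.sum_ite_eq,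
      ← Finset.mul_sum, ← Finset.sum_mul]
    rw [Finset.sum_ite_of_true (fun _ h => h), Finset.sum_add_distrib, ← Finset.mul_sum,
      Finset.sum_const, nsmul_eq_mul]
    change κ * x * (S * S) + n * (n * E) + (κ * x * S + n * E) = _
    ring
  have expand : ∑ a ∈ AA N x, ((∑ p ∈ Q N z, dv p a) - S) ^ 2 =
      ∑ p ∈ Q N z, ∑ q ∈ Q N z, ∑ a ∈ AA N x, dv p a * dv q a
        - 2 * S * ∑ p ∈ Q N z, ∑ a ∈ AA N x, dv p a + S ^ 2 * (AA N x).card := by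
    have e1 : ∑ p ∈ Q N z, ∑ a ∈ AA N x, dv p a = ∑ a ∈ AA N x, ∑ p ∈ Q N z, dv p a :=
      Finset.sum_comm
    have e2 : ∑ p ∈ Q N z, ∑ q ∈ Q N z, ∑ a ∈ AA N x, dv p a * dv q a =
        ∑ a ∈ AA N x, (∑ p ∈ Q N z, dv p a) ^ 2 := by
      rw [show (∑ p ∈ Q N z, ∑ q ∈ Q N z, ∑ a ∈ AA N x, dv p a * dv q a) =
        ∑ p ∈ Q N z, ∑ a ∈ AA N x, ∑ q ∈ Q N z, dv p a * dv q a from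
          Finset.sum_congr rfl fun p _ => Finset.sum_comm, Finset.sum_comm]
      refine Finset.sum_congr rfl fun a _ => ?_
      rw [sq, Finset.sum_mul_sum]
    rw [e1, e2, Finset.mul_sum, ← Finset.sum_sub_distrib, mul_comm (S ^ 2), ← nsmul_eq_mul,
      ← Finset.sum_const, ← Finset.sum_add_distrib]
    refine Finset.sum_congr rfl fun a _ => ?_
    ring
  rw [expand]
  have hEn : E * n ^ 2 ≤ C * D ^ 2 * x := by
    have : n ^ 2 ≤ D ^ 2 * (z * z) := by
      calc n ^ 2 ≤ (D * z) ^ 2 := pow_le_pow_left₀ hn0 hnz 2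
        _ = _ := by ring
    calc E * n ^ 2 ≤ E * (D ^ 2 * (z * z)) := mul_le_mul_of_nonneg_left this hE0
      _ = C * D ^ 2 * (x ^ θ * (z * z)) := by rw [hE]; ring
      _ ≤ C * D ^ 2 * x := by
        refine mul_le_mul_of_nonneg_left ?_ (by positivity)
        rw [hz, ← Real.rpow_add hx0, ← Real.rpow_add hx0]
        calc x ^ (θ + (c + c)) ≤ x ^ (1 : ℝ) :=
              Real.rpow_le_rpow_of_exponent_le hx (by rw [hc]; linarith)
          _ = x := Real.rpow_one x
  have t1 : 2 * S * (κ * x * S - n * E) ≤ 2 * S * ∑ p ∈ Q N z, ∑ a ∈ AA N x, dv p a :=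
    mul_le_mul_of_nonneg_left m1 (by positivity)
  have t2 : S ^ 2 * ((AA N x).card : ℝ) ≤ S ^ 2 * (κ * x + E) :=
    mul_le_mul_of_nonneg_left m0 (by positivity)
  have t3 : S * n * E ≤ E * n ^ 2 := by
    have : S * n ≤ n ^ 2 := by nlinarith
    nlinarith
  have t4 : S ^ 2 * E ≤ E * n ^ 2 := by
    have : S ^ 2 ≤ n ^ 2 := pow_le_pow_left₀ hS0 hSn 2
    nlinarith
  have t5 : n * E ≤ E * n ^ 2 := by nlinarith
  linarith

lemma omega_split {P : Type*} {N : P → ℕ} {κ θ : ℝ} (hN : ∀ p, 2 ≤ N p) (hs : StarCond N κ θ)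
    {c x : ℝ} (hc : 0 < c) (hx : 1 < x) {a : P →₀ ℕ} (ha : (Nm N a : ℝ) ≤ x) :
    |(omegaM a : ℝ) - ∑ p ∈ Q N (x ^ c), dv p a| ≤ 1 / c := by
  set z := x ^ c with hz
  have hz0 : 1 < z := Real.one_lt_rpow hx hc
  have e1 : ∑ p ∈ Q N z, dv p a = ((a.support.filter (fun p => p ∈ Q N z)).card : ℝ) := by
    simp only [dv]
    rw [Finset.sum_boole]
    congr 2
    ext p
    simp [and_comm]
  have e2 := Finset.card_filter_add_card_filter_not (s := a.support) (fun p => p ∈ Q N z)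
  have e3 : (omegaM a : ℝ) - ∑ p ∈ Q N z, dv p a =
      ((a.support.filter (fun p => ¬ p ∈ Q N z)).card : ℝ) := by
    rw [e1, omegaM, ← e2]
    push_cast
    ring
  rw [e3, abs_of_nonneg (by positivity)]
  set T := a.support.filter (fun p => ¬ p ∈ Q N z) with hT
  have h1 : z ^ T.card ≤ (Nm N a : ℝ) := by
    calc z ^ T.card = ∏ p ∈ T, z := by rw [Finset.prod_const]
      _ ≤ ∏ p ∈ T, ((N p ^ a p : ℕ) : ℝ) := by
        refine Finset.prod_le_prod (fun _ _ => by linarith) fun p hp => ?_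
        obtain ⟨hp1, hp2⟩ := Finset.mem_filter.1 hp
        rw [mem_Q hs] at hp2
        push Not at hp2
        refine hp2.le.trans ?_
        exact_mod_cast Nat.le_self_pow (Finsupp.mem_support_iff.1 hp1) _
      _ ≤ (Nm N a : ℝ) := by
        rw [← Nat.cast_prod]
        unfold Nm Finsupp.prod
        exact_mod_cast Finset.prod_le_prod_of_subset_of_one_le' (Finset.filter_subset _ _)
          (fun p _ _ => Nat.one_le_pow _ _ (by have := hN p; omega))
  have h2 := Real.log_le_log (by positivity) (h1.trans ha)
  have hl := Real.log_pos hx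
  rw [Real.log_pow, hz, Real.log_rpow (by linarith)] at h2
  rw [le_div_iff₀ hc]
  by_contra hcon
  push Not at hcon
  nlinarith

lemma HR {P : Type*} {N : P → ℕ} {κ θ : ℝ} (hN : ∀ p, 2 ≤ N p) (hs : StarCond N κ θ)
    {η : ℝ} (hη : 0 < η) :
    Tendsto (fun x : ℝ => (((AA N x).filter (fun a => η * Real.log (Real.log x) <
      |(omegaM a : ℝ) - Real.log (Real.log x)|)).card : ℝ) / x) atTop (𝓝 0) := by
  obtain ⟨K, hK, hT⟩ := turan hN hs
  obtain ⟨hκ, h0, h1, -⟩ := id hs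
  set c := (1 - θ) / 3 with hc
  have hc0 : 0 < c := by rw [hc]; linarith
  have hg : Tendsto (fun x : ℝ => (9 * (κ * (1 + η / 3)) / η ^ 2) / Real.log (Real.log x) +
      (9 * K / η ^ 2) / (Real.log (Real.log x) * Real.log (Real.log x))) atTop (𝓝 0) := by
    have a := loglog_tendsto.const_div_atTop (9 * (κ * (1 + η / 3)) / η ^ 2)
    have b := (loglog_tendsto.atTop_mul_atTop₀ loglog_tendsto).const_div_atTop (9 * K / η ^ 2)
    simpa using a.add b
  refine squeeze_zero' ?_ ?_ hg
  · filter_upwards [eventually_gt_atTop 0] with x hx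
    positivity
  · filter_upwards [mertens_pow hN hs hc0 (by positivity : 0 < η / 3), eventually_gt_atTop 1,
      loglog_tendsto.eventually_gt_atTop 0,
      loglog_tendsto.eventually_ge_atTop (1 / c / (η / 3))] with x hS hx hL0 hLc
    have hT := hT x hx.le
    set L := Real.log (Real.log x)
    set S := SS N (x ^ c)
    have hx0 : 0 < x := by linarith
    rw [div_le_iff₀ (by positivity)] at hLc
    set F := (AA N x).filter (fun a => η * L < |(omegaM a : ℝ) - L|) with hF
    have h2 : (F.card : ℝ) * (η / 3 * L) ^ 2 ≤ x * (κ * S + K) := by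
      refine le_trans ?_ hT
      rw [← nsmul_eq_mul, ← Finset.sum_const]
      refine (Finset.sum_le_sum (g := fun a => ((∑ p ∈ Q N (x ^ c), dv p a) - S) ^ 2)
        fun a ha => ?_).trans
        (Finset.sum_le_sum_of_subset_of_nonneg (Finset.filter_subset _ _)
          (fun _ _ _ => sq_nonneg _))
      obtain ⟨ha1, ha2⟩ := Finset.mem_filter.1 ha
      have h3 := omega_split hN hs hc0 hx ((mem_AA hs).1 ha1)
      rw [← sq_abs (_ - S)]
      refine pow_le_pow_left₀ (by positivity) ?_ 2
      have t1 := abs_add_three ((omegaM a : ℝ) - ∑ p ∈ Q N (x ^ c), dv p a)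
        ((∑ p ∈ Q N (x ^ c), dv p a) - S) (S - L)
      have t2 : (omegaM a : ℝ) - ∑ p ∈ Q N (x ^ c), dv p a +
        ((∑ p ∈ Q N (x ^ c), dv p a) - S) + (S - L) = omegaM a - L := by ring
      rw [t2] at t1
      linarith
    have h4 : κ * S + K ≤ κ * ((1 + η / 3) * L) + K := by
      have := (abs_le.1 hS).2
      have : S ≤ (1 + η / 3) * L := by linarith
      nlinarith
    have h5 : (F.card : ℝ) * (η / 3 * L) ^ 2 ≤ x * (κ * ((1 + η / 3) * L) + K) :=
      h2.trans (mul_le_mul_of_nonneg_left h4 hx0.le)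
    rw [div_le_iff₀ hx0]
    have h6 : (F.card : ℝ) ≤ x * (κ * ((1 + η / 3) * L) + K) / (η / 3 * L) ^ 2 := by
      rw [le_div_iff₀ (by positivity)]; exact h5
    refine h6.trans (le_of_eq ?_)
    field_simp
    ring

lemma summable_pi_prod {ι M : Type*} [Fintype ι] (f : ι → M → ℝ) (h0 : ∀ i m, 0 ≤ f i m)
    (hf : ∀ i, Summable (f i)) : Summable fun b : ι → M => ∏ i, f i (b i) := by
  refine summable_of_sum_le (c := ∏ i, ∑' m, f i m)
    (fun b => Finset.prod_nonneg fun i _ => h0 i _) fun u => ?_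
  calc ∑ b ∈ u, ∏ i, f i (b i)
      ≤ ∑ b ∈ Fintype.piFinset (fun i => u.image (fun b => b i)), ∏ i, f i (b i) := by
        refine Finset.sum_le_sum_of_subset_of_nonneg ?_
          (fun b _ _ => Finset.prod_nonneg fun i _ => h0 i _)
        intro b hb
        rw [Fintype.mem_piFinset]
        intro i
        exact Finset.mem_image_of_mem (fun b : ι → M => b i) hb
    _ = ∏ i, ∑ m ∈ u.image (fun b => b i), f i m := by rw [Finset.prod_univ_sum]
    _ ≤ _ := by
        refine Finset.prod_le_prod (fun i _ => Finset.sum_nonneg fun m _ => h0 i m) fun i _ => ?_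
        exact (hf i).sum_le_tsum _ (fun m _ => h0 i m)

/-- the higher part of an h-full element -/
def bt {P : Type*} (h : ℕ) (b : Fin h → P →₀ ℕ) : P →₀ ℕ := ∑ i : Fin h, (h + 1 + (i : ℕ)) • b i

lemma bt_summable {P : Type*} {N : P → ℕ} {κ θ : ℝ} (hN : ∀ p, 2 ≤ N p) (hs : StarCond N κ θ)
    {h : ℕ} (hh : 2 ≤ h) :
    Summable fun b : Fin h → P →₀ ℕ => (Nm N (bt h b) : ℝ) ^ (-(1 / (h : ℝ))) := by
  have hh0 : (0 : ℝ) < h := by positivity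
  refine (summable_pi_prod (fun (i : Fin h) (m : P →₀ ℕ) =>
    (Nm N m : ℝ) ^ (-(((h + 1 + (i : ℕ) : ℕ) : ℝ) / h))) (fun _ _ => by positivity) ?_).congr ?_
  · intro i
    refine (Z_summable_eq hN hs ?_).1
    rw [one_lt_div hh0]
    exact_mod_cast (by omega : h < h + 1 + (i : ℕ))
  · intro b
    unfold bt
    rw [Nm_sum]
    push_cast
    rw [← Real.finsetProd_rpow _ _ (fun _ _ => by positivity)]
    refine Finset.prod_congr rfl fun i _ => ?_
    rw [Nm_smul]
    push_cast
    rw [← Real.rpow_natCast, ← Real.rpow_mul (by positivity)]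
    congr 1
    push_cast
    ring

lemma decomp {P : Type*} {h : ℕ} (hh : 2 ≤ h) {m : P →₀ ℕ} (hm : HFull h m) :
    ∃ (a : P →₀ ℕ) (b : Fin h → P →₀ ℕ), m = h • a + bt h b := by
  refine ⟨m.mapRange (fun k => if k % h = 0 then k / h else k / h - 1) (by simp),
    fun i => m.mapRange (fun k => if k % h = (i : ℕ) + 1 then 1 else 0) (by simp), ?_⟩
  ext p
  simp only [bt, Finsupp.add_apply, Finsupp.smul_apply, Finsupp.finsetSum_apply,
    Finsupp.mapRange_apply, smul_eq_mul, mul_ite, mul_one, mul_zero]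
  set k := m p with hk
  have hdm := Nat.div_add_mod k h
  have hlt := Nat.mod_lt k (by omega : h > 0)
  by_cases hr : k % h = 0
  · rw [if_pos hr, Finset.sum_eq_zero]
    · omega
    · intro i _
      rw [if_neg (by omega)]
  · rw [if_neg hr, Finset.sum_eq_single (⟨k % h - 1, by omega⟩ : Fin h)]
    · rw [if_pos (by simp only; omega)]
      have hkh : h ≤ k := by
        rcases hm p with h0 | h1
        · exfalso
          rw [← hk] at h0
          simp [h0] at hr
        · exact h1
      have hq : 1 ≤ k / h := (Nat.one_le_div_iff (by omega)).2 hkh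
      obtain ⟨q, hq'⟩ := Nat.exists_eq_add_of_le hq
      rw [hq', Nat.add_sub_cancel_left]
      rw [hq', mul_add, mul_one] at hdm
      simp only
      omega
    · intro i _ hi
      rw [if_neg]
      intro hc
      apply hi
      ext
      simp only
      omega
    · simp

/-- exceptional elements -/
def Bad {P : Type*} (N : P → ℕ) (ε : ℝ) (m : P →₀ ℕ) : Prop :=
  (omegaM m : ℝ) < (1 - ε) * Real.log (Real.log (Nm N m)) ∨
    (1 + ε) * Real.log (Real.log (Nm N m)) < (omegaM m : ℝ)

/-- count of exceptional elements with given higher part -/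
def cnt {P : Type*} (N : P → ℕ) (h : ℕ) (ε : ℝ) (β : P →₀ ℕ) (x : ℝ) : ℝ :=
  (((AA N (x ^ (1 / (h : ℝ)))).filter
    (fun a => (Nm N (h • a + β) : ℝ) ≤ x ∧ Bad N ε (h • a + β))).card : ℝ)

lemma le_root {h : ℕ} (hh : 2 ≤ h) {n : ℕ} {x : ℝ} (hx : 0 ≤ x) :
    (n : ℝ) ≤ x ^ (1 / (h : ℝ)) ↔ ((n : ℝ) ^ h) ≤ x := by
  have hh0 : (h : ℕ) ≠ 0 := by omega
  constructor
  · intro hn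
    calc (n : ℝ) ^ h ≤ (x ^ (1 / (h : ℝ))) ^ h := pow_le_pow_left₀ (by positivity) hn h
      _ = x := by rw [one_div, Real.rpow_inv_natCast_pow hx hh0]
  · intro hn
    calc (n : ℝ) = ((n : ℝ) ^ h) ^ (1 / (h : ℝ)) := by
          rw [one_div, Real.pow_rpow_inv_natCast (by positivity) hh0]
      _ ≤ _ := Real.rpow_le_rpow (by positivity) hn (by positivity)

lemma cnt_le {P : Type*} {N : P → ℕ} {κ θ : ℝ} (hN : ∀ p, 2 ≤ N p) (hs : StarCond N κ θ)
    {h : ℕ} (hh : 2 ≤ h) (ε : ℝ) : ∃ D : ℝ, 0 < D ∧ ∀ β : P →₀ ℕ, ∀ x : ℝ, 0 < x →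
      cnt N h ε β x ≤ D * (Nm N β : ℝ) ^ (-(1 / (h : ℝ))) * x ^ (1 / (h : ℝ)) := by
  obtain ⟨D, hD, hd⟩ := II_le hN hs
  refine ⟨D, hD, fun β x hx => ?_⟩
  have hβ : (0 : ℝ) < Nm N β := by exact_mod_cast Nm_pos hN β
  have h1 : cnt N h ε β x ≤ II N ((x / Nm N β) ^ (1 / (h : ℝ))) := by
    rw [← card_AA hs]
    unfold cnt
    have : ((AA N (x ^ (1 / (h : ℝ)))).filter
      (fun a => (Nm N (h • a + β) : ℝ) ≤ x ∧ Bad N ε (h • a + β))) ⊆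
        AA N ((x / Nm N β) ^ (1 / (h : ℝ))) := by
      intro a ha
      obtain ⟨-, ha, -⟩ := Finset.mem_filter.1 ha
      rw [mem_AA hs, le_root hh (by positivity), le_div_iff₀ hβ]
      rw [Nm_add, Nm_smul] at ha
      exact_mod_cast ha
    exact_mod_cast Finset.card_le_card this
  refine h1.trans ((hd _ (by positivity)).trans (le_of_eq ?_))
  rw [Real.div_rpow hx.le hβ.le, Real.rpow_neg hβ.le]
  ring

lemma omega_lower {P : Type*} {h : ℕ} (hh : 2 ≤ h) (a β : P →₀ ℕ) :
    omegaM a ≤ omegaM (h • a + β) := by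
  refine Finset.card_le_card fun p hp => ?_
  rw [Finsupp.mem_support_iff] at hp ⊢
  simp only [Finsupp.add_apply, Finsupp.smul_apply, smul_eq_mul]
  have : 0 < h * a p := by positivity
  omega

lemma omega_upper {P : Type*} (h : ℕ) (a β : P →₀ ℕ) :
    omegaM (h • a + β) ≤ omegaM a + omegaM β := by
  unfold omegaM
  refine (Finset.card_le_card ?_).trans (Finset.card_union_le _ _)
  intro p hp
  rw [Finsupp.mem_support_iff] at hp
  rw [Finset.mem_union, Finsupp.mem_support_iff, Finsupp.mem_support_iff]
  by_contra hc
  push Not at hc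
  simp [hc.1, hc.2] at hp

lemma cnt_tendsto {P : Type*} {N : P → ℕ} {κ θ : ℝ} (hN : ∀ p, 2 ≤ N p) (hs : StarCond N κ θ)
    {h : ℕ} (hh : 2 ≤ h) {ε : ℝ} (hε : 0 < ε) (β : P →₀ ℕ) :
    Tendsto (fun x : ℝ => cnt N h ε β x / x ^ (1 / (h : ℝ))) atTop (𝓝 0) := by
  obtain ⟨D, hD, hd⟩ := II_le hN hs
  have hh0 : (0 : ℝ) < h := by positivity
  have hh1 : (1 : ℝ) ≤ h := by exact_mod_cast (by omega : 1 ≤ h)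
  have hy : Tendsto (fun x : ℝ => x ^ (1 / (h : ℝ))) atTop atTop :=
    tendsto_rpow_atTop (by positivity)
  have hg : Tendsto (fun y : ℝ => D * y ^ (-(1 / 2 : ℝ)) +
      (((AA N y).filter (fun a => ε / 2 * Real.log (Real.log y) <
      |(omegaM a : ℝ) - Real.log (Real.log y)|)).card : ℝ) / y) atTop (𝓝 0) := by
    simpa using ((tendsto_rpow_neg_atTop (by norm_num : (0 : ℝ) < 1 / 2)).const_mul D).add
      (HR hN hs (half_pos hε))
  refine squeeze_zero' ?_ ?_ (hg.comp hy)
  · filter_upwards [eventually_gt_atTop 0] with x hx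
    unfold cnt
    positivity
  set c0 := Real.log 2 + Real.log h with hc0
  filter_upwards [eventually_gt_atTop 1,
    (loglog_tendsto.comp hy).eventually_ge_atTop (c0 * (1 + ε) / (ε / 2)),
    (loglog_tendsto.comp hy).eventually_ge_atTop (((1 + ε) * c0 + omegaM β) / (ε / 2))]
    with x hx hL1 hL2
  simp only [Function.comp_apply] at hL1 hL2 ⊢
  rw [div_le_iff₀ (by positivity)] at hL1 hL2
  have hx0 : 0 < x := by linarith
  set y := x ^ (1 / (h : ℝ)) with hydef
  have hy1 : 1 < y := Real.one_lt_rpow hx (by positivity)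
  have hy0 : 0 < y := by linarith
  set L := Real.log (Real.log y) with hL
  have hlog2 : 0 ≤ Real.log 2 := Real.log_nonneg (by norm_num)
  have hlogh : 0 ≤ Real.log h := Real.log_nonneg hh1
  have hly := Real.log_pos hy1
  have hLx : Real.log (Real.log x) = L + Real.log h := by
    have : Real.log x = h * Real.log y := by
      rw [hydef, Real.log_rpow hx0]; field_simp
    rw [this, Real.log_mul hh0.ne' hly.ne', hL, add_comm]
  have hLs : Real.log (Real.log (y ^ (1 / 2 : ℝ))) = L - Real.log 2 := by
    rw [Real.log_rpow hy0, Real.log_mul (by norm_num) hly.ne', Real.log_div one_ne_zero two_ne_zero,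
      Real.log_one, hL]
    ring
  have hsub : ((AA N y).filter (fun a => (Nm N (h • a + β) : ℝ) ≤ x ∧ Bad N ε (h • a + β))) ⊆
      AA N (y ^ (1 / 2 : ℝ)) ∪
        ((AA N y).filter (fun a => ε / 2 * L < |(omegaM a : ℝ) - L|)) := by
    intro a ha
    obtain ⟨hay, hmx, hbad⟩ := Finset.mem_filter.1 ha
    rw [Finset.mem_union]
    by_cases hsm : a ∈ AA N (y ^ (1 / 2 : ℝ))
    · exact Or.inl hsm
    right
    rw [Finset.mem_filter]
    refine ⟨hay, ?_⟩
    rw [mem_AA hs] at hsm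
    push Not at hsm
    set m := h • a + β with hm
    have hNm : (Nm N a : ℝ) ≤ Nm N m := by
      rw [hm, Nm_add, Nm_smul]
      have h1 := Nm_pos hN a
      have h2 := Nm_pos hN β
      have h3 : Nm N a ≤ Nm N a ^ h := Nat.le_self_pow (by omega) _
      exact_mod_cast h3.trans (Nat.le_mul_of_pos_right _ h2)
    have hsq : 1 < y ^ (1 / 2 : ℝ) := Real.one_lt_rpow hy1 (by norm_num)
    have hm1 : y ^ (1 / 2 : ℝ) ≤ Nm N m := hsm.le.trans hNm
    have l1 : L - Real.log 2 ≤ Real.log (Real.log (Nm N m)) := by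
      rw [← hLs]
      exact Real.log_le_log (Real.log_pos hsq) (Real.log_le_log (by linarith) hm1)
    have l2 : Real.log (Real.log (Nm N m)) ≤ L + Real.log h := by
      rw [← hLx]
      exact Real.log_le_log (Real.log_pos (by linarith)) (Real.log_le_log (by linarith) hmx)
    have o1 : (omegaM a : ℝ) ≤ omegaM m := by exact_mod_cast omega_lower hh a β
    have o2 : (omegaM m : ℝ) ≤ omegaM a + omegaM β := by exact_mod_cast omega_upper h a β
    set l := Real.log (Real.log (Nm N m))
    rw [lt_abs]
    rcases hbad with hb | hb
    · right
      have hb : (omegaM m : ℝ) < (1 - ε) * l := hb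
      have : ε * (L - c0) ≤ ε * l := mul_le_mul_of_nonneg_left (by linarith) hε.le
      nlinarith
    · left
      have hb : (1 + ε) * l < (omegaM m : ℝ) := hb
      have : (1 + ε) * (L - c0) ≤ (1 + ε) * l := mul_le_mul_of_nonneg_left (by linarith) (by linarith)
      nlinarith
  have hcard : cnt N h ε β x ≤ D * y ^ (1 / 2 : ℝ) +
      (((AA N y).filter (fun a => ε / 2 * L < |(omegaM a : ℝ) - L|)).card : ℝ) := by
    have h1 := (Finset.card_le_card hsub).trans (Finset.card_union_le _ _)
    have h2 := hd (y ^ (1 / 2 : ℝ)) (by positivity)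
    rw [← card_AA hs] at h2
    have h3 : cnt N h ε β x ≤ ((AA N (y ^ (1 / 2 : ℝ))).card : ℝ) +
      (((AA N y).filter (fun a => ε / 2 * L < |(omegaM a : ℝ) - L|)).card : ℝ) := by
      unfold cnt
      exact_mod_cast h1
    linarith
  rw [div_le_iff₀ hy0, add_mul, div_mul_cancel₀ _ hy0.ne', mul_assoc]
  have : y ^ (-(1 / 2 : ℝ)) * y = y ^ (1 / 2 : ℝ) := by
    nth_rewrite 2 [← Real.rpow_one y]
    rw [← Real.rpow_add hy0]
    norm_num
  rw [this]
  exact hcard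

lemma numer_le {P : Type*} {N : P → ℕ} {κ θ : ℝ} (hN : ∀ p, 2 ≤ N p) (hs : StarCond N κ θ)
    {h : ℕ} (hh : 2 ≤ h) (ε : ℝ) {x : ℝ} (hx : 0 < x) :
    (({m : P →₀ ℕ | HFull h m ∧ (Nm N m : ℝ) ≤ x ∧ Bad N ε m}.ncard : ℝ)) / x ^ (1 / (h : ℝ)) ≤
      ∑' b : Fin h → P →₀ ℕ, cnt N h ε (bt h b) x / x ^ (1 / (h : ℝ)) := by
  obtain ⟨D, hD, hc⟩ := cnt_le hN hs hh ε
  have hxr : 0 < x ^ (1 / (h : ℝ)) := by positivity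
  have hcnt0 : ∀ β, 0 ≤ cnt N h ε β x := fun β => by unfold cnt; positivity
  have hsum : Summable fun b : Fin h → P →₀ ℕ => cnt N h ε (bt h b) x / x ^ (1 / (h : ℝ)) := by
    refine Summable.of_nonneg_of_le (fun b => div_nonneg (hcnt0 _) hxr.le) (fun b => ?_)
      ((bt_summable hN hs hh).mul_left D)
    rw [div_le_iff₀ hxr]
    exact hc _ x hx
  have hfin : {m : P →₀ ℕ | HFull h m ∧ (Nm N m : ℝ) ≤ x ∧ Bad N ε m}.Finite :=
    (fin_of_star hs x).subset fun m hm => hm.2.1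
  rw [Set.ncard_eq_toFinset_card _ hfin]
  have hex : ∀ m : P →₀ ℕ, ∃ ab : (P →₀ ℕ) × (Fin h → P →₀ ℕ), HFull h m →
      m = h • ab.1 + bt h ab.2 := by
    intro m
    by_cases hm : HFull h m
    · obtain ⟨a, b, hab⟩ := decomp hh hm
      exact ⟨(a, b), fun _ => hab⟩
    · exact ⟨(0, 0), fun h => absurd h hm⟩
  choose g hg using hex
  set T := hfin.toFinset with hT
  have hTm : ∀ m ∈ T, HFull h m ∧ (Nm N m : ℝ) ≤ x ∧ Bad N ε m := fun m hm => by
    simpa [hT] using hm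
  refine le_trans ?_ (hsum.sum_le_tsum (T.image fun m => (g m).2)
    (fun b _ => div_nonneg (hcnt0 _) hxr.le))
  rw [← Finset.sum_div]
  refine div_le_div_of_nonneg_right ?_ hxr.le
  rw [Finset.card_eq_sum_card_image (fun m => (g m).2) T]
  push_cast
  refine Finset.sum_le_sum fun b _ => ?_
  unfold cnt
  have : (T.filter (fun m => (g m).2 = b)).card ≤ ((AA N (x ^ (1 / (h : ℝ)))).filter
    (fun a => (Nm N (h • a + bt h b) : ℝ) ≤ x ∧ Bad N ε (h • a + bt h b))).card := by
    refine Finset.card_le_card_of_injOn (fun m => (g m).1) ?_ ?_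
    · intro m hm
      obtain ⟨hm1, hm2⟩ := Finset.mem_filter.1 (Finset.mem_coe.1 hm)
      obtain ⟨f1, f2, f3⟩ := hTm m hm1
      have e := hg m f1
      rw [hm2] at e
      rw [Finset.mem_coe, Finset.mem_filter, ← e]
      refine ⟨?_, f2, f3⟩
      rw [mem_AA hs, le_root hh hx.le]
      rw [e, Nm_add, Nm_smul] at f2
      refine le_trans ?_ f2
      exact_mod_cast Nat.le_mul_of_pos_right _ (Nm_pos hN _)
    · intro m hm m' hm' hmm
      obtain ⟨hm1, hm2⟩ := Finset.mem_filter.1 (Finset.mem_coe.1 hm)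
      obtain ⟨hm1', hm2'⟩ := Finset.mem_filter.1 (Finset.mem_coe.1 hm')
      have e := hg m (hTm m hm1).1
      have e' := hg m' (hTm m' hm1').1
      have hmm : (g m).1 = (g m').1 := hmm
      rw [e, e', hm2, hm2', hmm]
  exact_mod_cast this

lemma denom_ge {P : Type*} {N : P → ℕ} {κ θ : ℝ} (hs : StarCond N κ θ)
    {h : ℕ} (hh : 2 ≤ h) {x : ℝ} (hx : 0 < x) :
    II N (x ^ (1 / (h : ℝ))) ≤ ({m : P →₀ ℕ | HFull h m ∧ (Nm N m : ℝ) ≤ x}.ncard : ℝ) := by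
  unfold II
  have hfin : {m : P →₀ ℕ | HFull h m ∧ (Nm N m : ℝ) ≤ x}.Finite :=
    (fin_of_star hs x).subset fun m hm => hm.2
  have := Set.ncard_le_ncard_of_injOn (s := {m : P →₀ ℕ | (Nm N m : ℝ) ≤ x ^ (1 / (h : ℝ))})
    (t := {m : P →₀ ℕ | HFull h m ∧ (Nm N m : ℝ) ≤ x}) (fun a => h • a) ?_ ?_ hfin
  · exact_mod_cast this
  · intro a ha
    have ha : (Nm N a : ℝ) ≤ x ^ (1 / (h : ℝ)) := ha
    refine ⟨fun p => ?_, ?_⟩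
    · simp only [Finsupp.smul_apply, smul_eq_mul]
      rcases Nat.eq_zero_or_pos (a p) with h0 | h0
      · left; rw [h0, mul_zero]
      · right; exact Nat.le_mul_of_pos_right _ h0
    · rw [Nm_smul]
      push_cast
      exact (le_root hh hx.le).1 ha
  · intro a _ b _ hab
    ext p
    have := DFunLike.congr_fun hab p
    simp only [Finsupp.smul_apply, smul_eq_mul] at this
    exact Nat.eq_of_mul_eq_mul_left (by omega) this

/-- `ω` has normal order `log log N(m)` over the `h`-full elements. -/
theorem normal_order_omega_hfull {P : Type*} [Countable P] (N : P → ℕ)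
    (hN : ∀ p, 2 ≤ N p) (κ θ : ℝ) (hstar : StarCond N κ θ)
    (h : ℕ) (hh : 2 ≤ h) (ε : ℝ) (hε : 0 < ε) :
    Tendsto (fun x : ℝ =>
        (({m : P →₀ ℕ | HFull h m ∧ (Nm N m : ℝ) ≤ x ∧
            ((omegaM m : ℝ) < (1 - ε) * Real.log (Real.log (Nm N m)) ∨
              (1 + ε) * Real.log (Real.log (Nm N m)) < (omegaM m : ℝ))}.ncard : ℝ)
          / ({m : P →₀ ℕ | HFull h m ∧ (Nm N m : ℝ) ≤ x}.ncard : ℝ)))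
      atTop (𝓝 0) := by
  obtain ⟨D, hD, hc⟩ := cnt_le hN hstar hh ε
  have hκ := hstar.1
  have hh0 : (0 : ℝ) < h := by positivity
  have hT : Tendsto (fun x : ℝ => ∑' b : Fin h → P →₀ ℕ,
      cnt N h ε (bt h b) x / x ^ (1 / (h : ℝ))) atTop (𝓝 0) := by
    have := tendsto_tsum_of_dominated_convergence (𝓕 := (atTop : Filter ℝ))
      (f := fun (x : ℝ) (b : Fin h → P →₀ ℕ) => cnt N h ε (bt h b) x / x ^ (1 / (h : ℝ)))
      (g := fun _ => 0) ((bt_summable hN hstar hh).mul_left D)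
      (fun b => cnt_tendsto hN hstar hh hε (bt h b)) (by
        filter_upwards [eventually_gt_atTop 0] with x hx b
        have hcnt0 : 0 ≤ cnt N h ε (bt h b) x := by unfold cnt; positivity
        have hxr : 0 < x ^ (1 / (h : ℝ)) := by positivity
        rw [Real.norm_of_nonneg (div_nonneg hcnt0 hxr.le), div_le_iff₀ hxr]
        exact hc _ x hx)
    simpa using this
  have hy : Tendsto (fun x : ℝ => x ^ (1 / (h : ℝ))) atTop atTop :=
    tendsto_rpow_atTop (by positivity)
  have hden := ((II_tendsto hstar).comp hy).eventually
    (lt_mem_nhds (show κ / 2 < κ by linarith))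
  have hT2 : Tendsto (fun x : ℝ => (∑' b : Fin h → P →₀ ℕ,
      cnt N h ε (bt h b) x / x ^ (1 / (h : ℝ))) * (2 / κ)) atTop (𝓝 0) := by
    have := hT.mul_const (2 / κ)
    rwa [zero_mul] at this
  refine squeeze_zero' (Eventually.of_forall fun x => by positivity) ?_ hT2
  filter_upwards [hden, eventually_gt_atTop 0] with x h1 hx
  have hxr : 0 < x ^ (1 / (h : ℝ)) := by positivity
  simp only [Function.comp_apply] at h1
  rw [lt_div_iff₀ hxr] at h1
  have h2 := h1.le.trans (denom_ge hstar hh hx)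
  have h3 := numer_le hN hstar hh ε hx
  have h4 : (0 : ℝ) ≤ ({m : P →₀ ℕ | HFull h m ∧ (Nm N m : ℝ) ≤ x ∧ Bad N ε m}.ncard : ℝ) := by
    positivity
  calc _ ≤ ({m : P →₀ ℕ | HFull h m ∧ (Nm N m : ℝ) ≤ x ∧ Bad N ε m}.ncard : ℝ) /
        (κ / 2 * x ^ (1 / (h : ℝ))) := div_le_div_of_nonneg_left h4 (by positivity) h2
    _ = ({m : P →₀ ℕ | HFull h m ∧ (Nm N m : ℝ) ≤ x ∧ Bad N ε m}.ncard : ℝ) /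
        x ^ (1 / (h : ℝ)) * (2 / κ) := by field_simp
    _ ≤ _ := mul_le_mul_of_nonneg_right h3 (by positivity)
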